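/- Let n ≥ 2, let q : ℝ^n_+ → ℝ satisfy the cost-function conditions, and let c ∈ ℝ^n_+. Then the profit operator Π_q is injective on L^1_{I−c}(ℝ^n_+) (i.e., if f ∈ L^1_{I−c}(ℝ^n_+) and (Π_q f)(p_0,p) = 0 for all p_0 > 0 and all p ∈ ℝ^n_+, then f = 0 a.e.) if and only if the set { ξ ∈ ℝ^n : (M e^{−q})(c + iξ) = 0 } is nowhere dense in ℝ^n. -/

import Mathlib

open MeasureTheory Complex Set

noncomputable section

/-- The positive orthant `ℝ^n_+`. -/
def posOrth (n : ℕ) : Set (Fin n → ℝ) := {x | ∀ i, 0 < x i}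

/-- `q` satisfies the cost-function conditions: `C¹` on `ℝ^n_+`, positive,
positively homogeneous of degree one, with bounded level sets. -/
def IsCostFun (n : ℕ) (q : (Fin n → ℝ) → ℝ) : Prop :=
  ContDiffOn ℝ 1 q (posOrth n) ∧
  (∀ x ∈ posOrth n, 0 < q x) ∧
  (∀ lam : ℝ, 0 < lam → ∀ x ∈ posOrth n, q (fun i => lam * x i) = lam * q x) ∧
  (∀ t : ℝ, Bornology.IsBounded {x | x ∈ posOrth n ∧ q x = t})

/-- The `n`-dimensional Mellin transform `(Mg)(z) = ∫_{ℝ^n_+} x^{z-I} g(x) dx`. -/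
def mellinT (n : ℕ) (g : (Fin n → ℝ) → ℝ) (z : Fin n → ℂ) : ℂ :=
  ∫ x in posOrth n, (∏ i, (x i : ℂ) ^ (z i - 1)) * g x

/-- Membership in `L¹_c(ℝ^n_+)`: measurable with `∫ |f| x^{c-I} < ∞`. -/
def MemL1w (n : ℕ) (c : Fin n → ℝ) (f : (Fin n → ℝ) → ℝ) : Prop :=
  IntegrableOn (fun x => f x * ∏ i, x i ^ (c i - 1)) (posOrth n)

/-- The profit operator `(Π_q f)(p₀, p)`. -/
def Piq (n : ℕ) (q : (Fin n → ℝ) → ℝ) (f : (Fin n → ℝ) → ℝ)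
    (p0 : ℝ) (p : Fin n → ℝ) : ℝ :=
  ∫ x in posOrth n, max 0 (p0 - q (fun i => p i * x i)) * f x

/-!
In the coordinates `x = e^t`, `p = p₀ e^s`, homogeneity of `q` turns `Π_q` into convolution on
`ℝ^n` with the kernel `K(t) = e^{c·t} (1 - q(e^t))₊`, and `L¹_{I-c}(ℝ^n_+)` into `L¹(ℝ^n)`.
Convolution with an integrable `K` is injective on `L¹` iff the closed zero set of `𝓕 K` has empty
interior: if `𝓕 K` is nonzero on a dense set, then `𝓕 F · 𝓕 K = 0` forces the continuous function
`𝓕 F` to vanish, and otherwise a bump function supported among the zeros is the Fourier transform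
of a nonzero `F` with `F ⋆ K = 0`.

Up to a rescaling of the frequency, `𝓕 K` is the Mellin transform of `(1 - q)₊` on `c + iℝ^n`.
Integrating `e^{-q} = ∫₀^∞ e^{-p} (p - q)₊ dp` against `x^{z-I}` and using homogeneity once more
gives `(M e^{-q})(z) = Γ(z₁ + ⋯ + z_n + 2) (M (1 - q)₊)(z)`, and `Γ` has no zeros.
-/

lemma isNowhereDense_preimage_homeomorph {X Y : Type*} [TopologicalSpace X] [TopologicalSpace Y]
    (e : X ≃ₜ Y) {s : Set Y} : IsNowhereDense (e ⁻¹' s) ↔ IsNowhereDense s := by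
  rw [IsNowhereDense, IsNowhereDense, ← e.preimage_closure, ← e.preimage_interior,
    preimage_eq_empty_iff, e.range_coe, disjoint_univ]

section ConvolutionOperators

open scoped FourierTransform Convolution ContDiff SchwartzMap
open ContinuousLinearMap (mul)

variable {V : Type*} [NormedAddCommGroup V] [InnerProductSpace ℝ V] [FiniteDimensional ℝ V]
  [MeasurableSpace V] [BorelSpace V]

lemma continuous_fourier_of_integrable {F : V → ℂ} (hF : Integrable F) : Continuous (𝓕 F) :=
  VectorFourier.fourierIntegral_continuous Real.continuous_fourierChar
    (by exact continuous_inner) hF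

lemma integral_fourier_mul_schwartz {F : V → ℂ} (hF : Integrable F) (H : 𝓢(V, ℂ)) :
    ∫ w, 𝓕 F w * H w = ∫ x, F x * 𝓕 (H : V → ℂ) x := by
  simpa using! VectorFourier.integral_fourierIntegral_smul_eq_flip (L := innerₗ V)
    Real.continuous_fourierChar continuous_inner hF H.integrable

lemma ae_eq_zero_of_fourier_eq_zero {F : V → ℂ} (hF : Integrable F) (h : 𝓕 F = 0) :
    F =ᵐ[volume] 0 := by
  refine ae_eq_zero_of_integral_contDiff_smul_eq_zero hF.locallyIntegrable
    fun g g_smooth g_supp => ?_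
  have hg_supp : HasCompactSupport (ofRealCLM ∘ g) := g_supp.comp_left rfl
  have hg_smooth : ContDiff ℝ ∞ (ofRealCLM ∘ g) := by fun_prop
  set G : 𝓢(V, ℂ) := hg_supp.toSchwartzMap hg_smooth with hG
  have key := integral_fourier_mul_schwartz hF (𝓕⁻ G)
  rw [← SchwartzMap.fourier_coe, FourierTransform.fourier_fourierInv_eq] at key
  calc ∫ x, g x • F x = ∫ x, F x * G x := by simp [hG, mul_comm]
    _ = 0 := by simp [← key, h]

lemma convolutionExists_schwartz {K : V → ℂ} (hK : Integrable K) (H : 𝓢(V, ℂ)) :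
    ConvolutionExists (H : V → ℂ) K (mul ℂ ℂ) := by
  intro s
  obtain ⟨C, hC⟩ := H.decay 0 0
  refine convolutionExistsAt_iff_integrable_swap.2 (hK.bdd_mul (c := C) ?_ ?_)
  · exact (H.continuous.comp (continuous_sub_left s)).aestronglyMeasurable
  · exact .of_forall fun t => by simpa using hC.2 (s - t)

lemma continuous_schwartz_convolution {K : V → ℂ} (hK : Integrable K) (H : 𝓢(V, ℂ)) :
    Continuous ((H : V → ℂ) ⋆[mul ℂ ℂ] K) := by
  obtain ⟨C, hC⟩ := H.decay 0 0
  rw [← convolution_flip]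
  refine BddAbove.continuous_convolution_right_of_integrable _ ⟨C, ?_⟩ hK H.continuous
  rintro _ ⟨x, rfl⟩
  simpa using hC.2 x

lemma schwartz_convolution_eq_zero {K : V → ℂ} (hK : Integrable K) (H : 𝓢(V, ℂ))
    (h : ∀ w, 𝓕 (H : V → ℂ) w * 𝓕 K w = 0) : (H : V → ℂ) ⋆[mul ℂ ℂ] K = 0 := by
  simp_rw [← Real.fourier_mul_convolution_eq H.integrable hK] at h
  exact ((continuous_schwartz_convolution hK H).ae_eq_iff_eq volume continuous_zero).1 <|
    ae_eq_zero_of_fourier_eq_zero (H.integrable.integrable_convolution _ hK) (funext h)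

lemma exists_schwartz_convolution_eq_zero {K : V → ℂ} (hK : Integrable K) {w : V}
    (hw : w ∈ interior {w | 𝓕 K w = 0}) :
    ∃ H : 𝓢(V, ℂ), 𝓕 (H : V → ℂ) w ≠ 0 ∧ (H : V → ℂ) ⋆[mul ℂ ℂ] K = 0 := by
  obtain ⟨g, g_sub, g_supp, g_smooth, -, g_w⟩ :=
    exists_contDiff_tsupport_subset (n := ⊤) (mem_interior_iff_mem_nhds.1 hw)
  have hg_supp : HasCompactSupport (ofRealCLM ∘ g) := g_supp.comp_left rfl
  have hg_smooth : ContDiff ℝ ∞ (ofRealCLM ∘ g) := by fun_prop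
  set G : 𝓢(V, ℂ) := hg_supp.toSchwartzMap hg_smooth with hG
  have fourier_H : 𝓕 ((𝓕⁻ G : 𝓢(V, ℂ)) : V → ℂ) = G := by
    rw [← SchwartzMap.fourier_coe, FourierTransform.fourier_fourierInv_eq]
  refine ⟨𝓕⁻ G, by rw [fourier_H]; simp [hG, g_w],
    schwartz_convolution_eq_zero hK _ fun v => ?_⟩
  rw [fourier_H]
  by_cases hv : g v = 0
  · simp [hG, hv]
  · exact mul_eq_zero_of_right _ (g_sub (subset_tsupport g hv))

lemma ae_eq_zero_of_convolution_ae_eq_zero {F K : V → ℂ} (hF : Integrable F) (hK : Integrable K)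
    (hdense : Dense {w | 𝓕 K w = 0}ᶜ) (hconv : F ⋆[mul ℂ ℂ] K =ᵐ[volume] 0) :
    F =ᵐ[volume] 0 := by
  have hprod (w : V) : 𝓕 F w * 𝓕 K w = 0 := by
    rw [← Real.fourier_mul_convolution_eq hF hK, Real.fourier_congr_ae hconv]
    simp [Real.fourier_eq]
  refine ae_eq_zero_of_fourier_eq_zero hF <|
    Continuous.ext_on hdense (continuous_fourier_of_integrable hF) continuous_zero fun w hw => ?_
  exact (mul_eq_zero.1 (hprod w)).resolve_right hw

lemma convolution_ofReal (F K : V → ℝ) :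
    (fun x => (F x : ℂ)) ⋆[mul ℂ ℂ] (fun x => (K x : ℂ)) =
      fun s => (((F ⋆[mul ℝ ℝ] K) s : ℝ) : ℂ) := by
  ext s
  simp only [convolution, ContinuousLinearMap.mul_apply', ← integral_complex_ofReal, ofReal_mul]

lemma clm_comp_convolution_ofReal (L : ℂ →L[ℝ] ℝ) {H : V → ℂ} {K : V → ℝ}
    (h : ConvolutionExists H (fun x => (K x : ℂ)) (mul ℂ ℂ)) :
    (L ∘ H) ⋆[mul ℝ ℝ] K = L ∘ (H ⋆[mul ℂ ℂ] fun x => (K x : ℂ)) := by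
  ext s
  simp only [Function.comp_apply, convolution, ← L.integral_comp_comm (h s)]
  congr with t
  simp [mul_comm (H t), ← real_smul, mul_comm (L (H t))]

theorem convolution_injective_iff_isNowhereDense_fourier_zeros {K : V → ℝ} (hK : Integrable K) :
    (∀ F : V → ℝ, Integrable F → F ⋆[mul ℝ ℝ] K = 0 → F =ᵐ[volume] 0) ↔
      IsNowhereDense {w | 𝓕 (fun x => (K x : ℂ)) w = 0} := by
  have hKC : Integrable (fun x => (K x : ℂ)) := hK.ofReal
  have hclosed : IsClosed {w | 𝓕 (fun x => (K x : ℂ)) w = 0} :=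
    isClosed_eq (continuous_fourier_of_integrable hKC) continuous_const
  rw [hclosed.isNowhereDense_iff]
  constructor
  · refine fun hinj => eq_empty_of_forall_notMem fun w hw => ?_
    obtain ⟨H, H_w, H_conv⟩ := exists_schwartz_convolution_eq_zero hKC hw
    have part_eq_zero (L : ℂ →L[ℝ] ℝ) : L ∘ H =ᵐ[volume] 0 := by
      refine hinj _ (L.integrable_comp H.integrable) ?_
      rw [clm_comp_convolution_ofReal L (convolutionExists_schwartz hKC H), H_conv]
      exact funext fun _ => map_zero L
    have H_eq_zero : (H : V → ℂ) =ᵐ[volume] 0 := by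
      filter_upwards [part_eq_zero reCLM, part_eq_zero imCLM] with t hre him
      exact Complex.ext hre him
    exact H_w (by simp [Real.fourier_congr_ae H_eq_zero, Real.fourier_eq])
  · intro hempty F hF hconv
    have hF_eq_zero : (fun x => (F x : ℂ)) =ᵐ[volume] 0 :=
      ae_eq_zero_of_convolution_ae_eq_zero hF.ofReal hKC
        (interior_eq_empty_iff_dense_compl.1 hempty) (.of_forall fun s => by
          simp [convolution_ofReal, hconv])
    filter_upwards [hF_eq_zero] with x hx
    exact ofReal_eq_zero.1 hx

end ConvolutionOperators

section LogarithmicCoordinates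

variable {n : ℕ}

/-- Coordinatewise exponential, the diffeomorphism from Euclidean space onto the positive orthant.
The domain is `EuclideanSpace` since that is where the Fourier transform lives. -/
def expVec (t : EuclideanSpace ℝ (Fin n)) : Fin n → ℝ := fun i => Real.exp (t i)

lemma expVec_mem_posOrth (t : EuclideanSpace ℝ (Fin n)) : expVec t ∈ posOrth n :=
  fun i => Real.exp_pos (t i)

lemma exists_expVec_eq {x : Fin n → ℝ} (hx : x ∈ posOrth n) : ∃ t, expVec t = x :=
  ⟨WithLp.toLp 2 fun i => Real.log (x i), funext fun i => Real.exp_log (hx i)⟩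

lemma expVec_add (s t : EuclideanSpace ℝ (Fin n)) :
    expVec (s + t) = fun i => expVec s i * expVec t i :=
  funext fun i => Real.exp_add (s i) (t i)

lemma prod_expVec_rpow (a : Fin n → ℝ) (t : EuclideanSpace ℝ (Fin n)) :
    ∏ i, expVec t i ^ a i = Real.exp (∑ i, a i * t i) := by
  simp only [expVec, ← Real.exp_mul, Real.exp_sum, mul_comm]

lemma posOrth_eq_pi : posOrth n = univ.pi fun _ => Ioi 0 := by
  ext x
  simp [posOrth]

lemma measurableSet_posOrth : MeasurableSet (posOrth n) := by
  rw [posOrth_eq_pi]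
  exact MeasurableSet.univ_pi fun _ => measurableSet_Ioi

lemma measurableEmbedding_expVec : MeasurableEmbedding (expVec (n := n)) := by
  refine Continuous.measurableEmbedding (by unfold expVec; fun_prop) fun s t h => ?_
  ext i
  exact Real.exp_injective (congrFun h i)

lemma map_withDensity_comp {α β : Type*} [MeasurableSpace α] [MeasurableSpace β] {μ : Measure α}
    {f : α → β} (hf : Measurable f) {ρ : β → ENNReal} (hρ : Measurable ρ) :
    (μ.withDensity (ρ ∘ f)).map f = (μ.map f).withDensity ρ := by
  ext s hs
  rw [Measure.map_apply hf hs, withDensity_apply _ (hf hs), withDensity_apply _ hs,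
    setLIntegral_map hs hρ hf]
  rfl

lemma map_exp_withDensity_volume {ι : Type*} [Fintype ι] :
    (volume.withDensity fun t : ι → ℝ => ENNReal.ofReal (∏ i, Real.exp (t i))).map
      (fun t i => Real.exp (t i)) = volume.restrict (univ.pi fun _ => Ioi 0) := by
  let D (t : ι → ℝ) : (ι → ℝ) →L[ℝ] (ι → ℝ) := ContinuousLinearMap.pi fun i =>
    (ContinuousLinearMap.toSpanSingleton ℝ (Real.exp (t i))).comp (ContinuousLinearMap.proj i)
  have hD (t : ι → ℝ) : HasFDerivAt (fun (t : ι → ℝ) i => Real.exp (t i)) (D t) t :=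
    hasFDerivAt_pi.2 fun i =>
      HasFDerivAt.comp (f := fun s : ι → ℝ => s i) t (Real.hasDerivAt_exp (t i)).hasFDerivAt
        (hasFDerivAt_apply i t)
  have det_D (t : ι → ℝ) : |(D t).det| = ∏ i, Real.exp (t i) := by
    simp only [D, ContinuousLinearMap.det_pi, ContinuousLinearMap.det_toSpanSingleton]
    exact abs_of_pos (by positivity)
  have hinj : Function.Injective fun (t : ι → ℝ) i => Real.exp (t i) :=
    Real.exp_injective.comp_left
  have himage : (fun (t : ι → ℝ) i => Real.exp (t i)) '' univ = univ.pi fun _ => Ioi 0 := by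
    rw [image_univ, ← Real.range_exp]
    exact range_piMap fun _ => Real.exp
  rw [← himage, ← map_withDensity_abs_det_fderiv_eq_addHaar volume
    MeasurableSet.univ.nullMeasurableSet (fun t _ => (hD t).hasFDerivWithinAt) hinj.injOn]
  simp only [Measure.restrict_univ, det_D]

lemma map_expVec_withDensity_volume :
    (volume.withDensity fun t => ENNReal.ofReal (∏ i, expVec t i)).map (expVec (n := n)) =
      volume.restrict (posOrth n) := by
  rw [posOrth_eq_pi, ← map_exp_withDensity_volume, ← (PiLp.volume_preserving_ofLp (Fin n)).map_eq,
    ← map_withDensity_comp (by fun_prop) (by fun_prop), Measure.map_map (by fun_prop) (by fun_prop)]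
  rfl

lemma measurable_ofReal_prod_expVec :
    Measurable fun t : EuclideanSpace ℝ (Fin n) => ENNReal.ofReal (∏ i, expVec t i) := by
  unfold expVec
  fun_prop

variable {E : Type*} [NormedAddCommGroup E] [NormedSpace ℝ E]

lemma toReal_ofReal_prod_expVec (t : EuclideanSpace ℝ (Fin n)) :
    (ENNReal.ofReal (∏ i, expVec t i)).toReal = ∏ i, expVec t i :=
  ENNReal.toReal_ofReal (Finset.prod_nonneg fun i _ => (expVec_mem_posOrth t i).le)

lemma setIntegral_posOrth (g : (Fin n → ℝ) → E) :
    ∫ x in posOrth n, g x = ∫ t, (∏ i, expVec t i) • g (expVec t) := by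
  rw [← map_expVec_withDensity_volume, measurableEmbedding_expVec.integral_map,
    integral_withDensity_eq_integral_toReal_smul measurable_ofReal_prod_expVec (by simp)]
  simp only [toReal_ofReal_prod_expVec]

lemma integrableOn_posOrth_iff (g : (Fin n → ℝ) → E) :
    IntegrableOn g (posOrth n) ↔ Integrable fun t => (∏ i, expVec t i) • g (expVec t) := by
  rw [IntegrableOn, ← map_expVec_withDensity_volume,
    measurableEmbedding_expVec.integrable_map_iff,
    integrable_withDensity_iff_integrable_smul' measurable_ofReal_prod_expVec (by simp)]
  simp only [toReal_ofReal_prod_expVec, Function.comp_apply]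

lemma ae_restrict_posOrth_iff {P : (Fin n → ℝ) → Prop} :
    (∀ᵐ x ∂volume.restrict (posOrth n), P x) ↔ ∀ᵐ t, P (expVec t) := by
  rw [← map_expVec_withDensity_volume, measurableEmbedding_expVec.ae_map_iff,
    ae_withDensity_iff measurable_ofReal_prod_expVec]
  refine Filter.eventually_congr (.of_forall fun t => imp_iff_right ?_)
  exact (ENNReal.ofReal_pos.2 (Finset.prod_pos fun i _ => expVec_mem_posOrth t i)).ne'

end LogarithmicCoordinates

section ExponentialAverages

lemma hasDerivAt_neg_exp_neg_mul_sub_add_one (a p : ℝ) :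
    HasDerivAt (fun p => -(Real.exp (-p) * (p - a + 1))) (Real.exp (-p) * (p - a)) p :=
  (((hasDerivAt_neg p).exp.mul (((hasDerivAt_id p).sub_const a).add_const 1)).neg).congr_deriv
    (by simp only [id_eq]; ring)

lemma tendsto_neg_exp_neg_mul_sub_add_one (a : ℝ) :
    Filter.Tendsto (fun p => -(Real.exp (-p) * (p - a + 1))) Filter.atTop (nhds 0) := by
  have hpow := Real.tendsto_pow_mul_exp_neg_atTop_nhds_zero 1
  have hconst := Real.tendsto_exp_neg_atTop_nhds_zero.mul_const (1 - a)
  have hsum := (hpow.add hconst).neg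
  simp only [zero_mul, add_zero, neg_zero] at hsum
  exact hsum.congr fun p => by ring

lemma integral_exp_neg_mul_max_sub {a : ℝ} (ha : 0 ≤ a) :
    ∫ p in Ioi 0, Real.exp (-p) * max 0 (p - a) = Real.exp (-a) := by
  calc ∫ p in Ioi 0, Real.exp (-p) * max 0 (p - a)
      = ∫ p in Ioi a, Real.exp (-p) * max 0 (p - a) := by
        refine setIntegral_eq_of_subset_of_forall_sdiff_eq_zero measurableSet_Ioi
          (Ioi_subset_Ioi ha) fun p hp => ?_
        rw [max_eq_left (sub_nonpos.2 (notMem_Ioi.1 hp.2)), mul_zero]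
    _ = ∫ p in Ioi a, Real.exp (-p) * (p - a) :=
        setIntegral_congr_fun measurableSet_Ioi fun p hp => by
          simp only [max_eq_right (sub_pos.2 (mem_Ioi.1 hp)).le]
    _ = 0 - -(Real.exp (-a) * (a - a + 1)) :=
        integral_Ioi_of_hasDerivAt_of_nonneg'
          (fun p _ => hasDerivAt_neg_exp_neg_mul_sub_add_one a p)
          (fun p hp => mul_nonneg (Real.exp_pos _).le (sub_pos.2 hp).le)
          (tendsto_neg_exp_neg_mul_sub_add_one a)
    _ = Real.exp (-a) := by ring

lemma integrableOn_exp_neg_mul_max_sub {a : ℝ} (ha : 0 ≤ a) :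
    IntegrableOn (fun p => Real.exp (-p) * max 0 (p - a)) (Ioi 0) :=
  .of_integral_ne_zero (by rw [integral_exp_neg_mul_max_sub ha]; exact (Real.exp_pos _).ne')

variable {α : Type*} [MeasurableSpace α] {μ : Measure α} {W : α → ℂ} {Q : α → ℝ}

lemma integrable_prod_mul_exp_neg_mul_max_sub [SFinite μ]
    (hW : AEStronglyMeasurable W μ) (hQ : AEMeasurable Q μ) (hQ_nonneg : ∀ᵐ x ∂μ, 0 ≤ Q x)
    (hWQ : Integrable (fun x => W x * (Real.exp (-Q x) : ℂ)) μ) :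
    Integrable (fun y : α × ℝ => W y.1 * (Real.exp (-y.2) * max 0 (y.2 - Q y.1) : ℝ))
      (μ.prod (volume.restrict (Ioi 0))) := by
  have : AEMeasurable (fun y : α × ℝ => Q y.1) (μ.prod (volume.restrict (Ioi 0))) :=
    hQ.comp_fst
  have hmeas : AEStronglyMeasurable
      (fun y : α × ℝ => W y.1 * (Real.exp (-y.2) * max 0 (y.2 - Q y.1) : ℝ))
      (μ.prod (volume.restrict (Ioi 0))) :=
    hW.comp_fst.mul (by fun_prop : AEMeasurable _ _).aestronglyMeasurable
  refine (integrable_prod_iff hmeas).2 ⟨?_, hWQ.norm.congr ?_⟩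
  · filter_upwards [hQ_nonneg] with x hx
    exact (integrableOn_exp_neg_mul_max_sub hx).ofReal.const_mul (W x)
  · filter_upwards [hQ_nonneg] with x hx
    have hnonneg (p : ℝ) : 0 ≤ Real.exp (-p) * max 0 (p - Q x) := by positivity
    simp only [norm_mul (W x), norm_real, Real.norm_of_nonneg (hnonneg _),
      Real.norm_of_nonneg (Real.exp_pos _).le, integral_const_mul,
      integral_exp_neg_mul_max_sub hx]

lemma integral_mul_exp_neg_eq_integral_integral_max_sub [SFinite μ]
    (hW : AEStronglyMeasurable W μ) (hQ : AEMeasurable Q μ) (hQ_nonneg : ∀ᵐ x ∂μ, 0 ≤ Q x)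
    (hWQ : Integrable (fun x => W x * (Real.exp (-Q x) : ℂ)) μ) :
    ∫ x, W x * (Real.exp (-Q x) : ℂ) ∂μ =
      ∫ p in Ioi (0 : ℝ), (Real.exp (-p) : ℂ) * ∫ x, W x * (max 0 (p - Q x) : ℝ) ∂μ := by
  calc ∫ x, W x * (Real.exp (-Q x) : ℂ) ∂μ
      = ∫ x, (∫ p in Ioi (0 : ℝ), W x * (Real.exp (-p) * max 0 (p - Q x) : ℝ)) ∂μ := by
        refine integral_congr_ae (hQ_nonneg.mono fun x hx => ?_)
        simp only [integral_const_mul, integral_complex_ofReal, integral_exp_neg_mul_max_sub hx]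
    _ = ∫ p in Ioi (0 : ℝ), ∫ x, W x * (Real.exp (-p) * max 0 (p - Q x) : ℝ) ∂μ :=
        integral_integral_swap (integrable_prod_mul_exp_neg_mul_max_sub hW hQ hQ_nonneg hWQ)
    _ = ∫ p in Ioi (0 : ℝ), (Real.exp (-p) : ℂ) * ∫ x, W x * (max 0 (p - Q x) : ℝ) ∂μ := by
        simp only [ofReal_mul, mul_left_comm (W _), integral_const_mul]

end ExponentialAverages

section LogPullback

open scoped FourierTransform Convolution
open ContinuousLinearMap (mul)

variable {n : ℕ}

/-- The function `x ↦ x^a f(x)` on the positive orthant, read in the coordinates `x = expVec t`.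
It turns the weighted space `L¹_a(ℝ^n_+)` into `L¹` of Euclidean space. -/
def logPullback (a : Fin n → ℝ) (f : (Fin n → ℝ) → ℝ) (t : EuclideanSpace ℝ (Fin n)) : ℝ :=
  Real.exp (∑ i, a i * t i) * f (expVec t)

lemma memL1w_iff_integrable_logPullback {a : Fin n → ℝ} {f : (Fin n → ℝ) → ℝ} :
    MemL1w n a f ↔ Integrable (logPullback a f) := by
  rw [MemL1w, integrableOn_posOrth_iff]
  refine integrable_congr (.of_forall fun t => ?_)
  have hweight : (∏ i, expVec t i) * ∏ i, expVec t i ^ (a i - 1) = Real.exp (∑ i, a i * t i) := by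
    rw [← prod_expVec_rpow, ← Finset.prod_mul_distrib]
    exact Finset.prod_congr rfl fun i _ => by
      rw [Real.rpow_sub_one (expVec_mem_posOrth t i).ne',
        mul_div_cancel₀ _ (expVec_mem_posOrth t i).ne']
  simp only [logPullback, ← hweight, smul_eq_mul]
  ring

lemma ae_posOrth_eq_zero_iff_logPullback (a : Fin n → ℝ) (f : (Fin n → ℝ) → ℝ) :
    (∀ᵐ x ∂volume.restrict (posOrth n), f x = 0) ↔ ∀ᵐ t, logPullback a f t = 0 := by
  simp only [ae_restrict_posOrth_iff, logPullback, mul_eq_zero, Real.exp_ne_zero, false_or]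

lemma logPullback_surjective (a : Fin n → ℝ) : Function.Surjective (logPullback a) := by
  intro F
  obtain ⟨f, hf⟩ := measurableEmbedding_expVec.injective.surjective_comp_right
    fun t => Real.exp (-∑ i, a i * t i) * F t
  refine ⟨f, funext fun t => ?_⟩
  rw [logPullback, show f (expVec t) = _ from congrFun hf t, ← mul_assoc, ← Real.exp_add,
    add_neg_cancel, Real.exp_zero, one_mul]

lemma mellinT_eq_integral_expVec (g : (Fin n → ℝ) → ℝ) (z : Fin n → ℂ) :
    mellinT n g z =
      ∫ t : EuclideanSpace ℝ (Fin n), cexp (∑ i, z i * t i) * g (expVec t) := by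
  rw [mellinT, setIntegral_posOrth]
  refine integral_congr_ae (.of_forall fun t => ?_)
  have hfactor (i : Fin n) :
      (expVec t i : ℂ) * (expVec t i : ℂ) ^ (z i - 1) = cexp (z i * t i) := by
    have hne : (expVec t i : ℂ) ≠ 0 := ofReal_ne_zero.2 (expVec_mem_posOrth t i).ne'
    rw [cpow_sub _ _ hne, cpow_one, mul_div_cancel₀ _ hne, cpow_def_of_ne_zero hne,
      ← ofReal_log (expVec_mem_posOrth t i).le, expVec, Real.log_exp, mul_comm]
  simp only [real_smul, ofReal_prod, ← mul_assoc, ← Finset.prod_mul_distrib, hfactor, exp_sum]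

lemma mellinT_eq_cpow_mul_mellinT_comp_mul (g : (Fin n → ℝ) → ℝ) (z : Fin n → ℂ)
    {r : ℝ} (hr : 0 < r) :
    mellinT n g z = (r : ℂ) ^ (∑ i, z i) * mellinT n (fun x => g fun i => r * x i) z := by
  have hr_ne : (r : ℂ) ≠ 0 := ofReal_ne_zero.2 hr.ne'
  simp only [mellinT_eq_integral_expVec, ← integral_const_mul]
  rw [← integral_add_left_eq_self _ (WithLp.toLp 2 fun _ : Fin n => Real.log r)]
  refine integral_congr_ae (.of_forall fun t => ?_)
  simp only [expVec_add]
  simp only [expVec, Real.exp_log hr, PiLp.add_apply, ofReal_add, mul_add,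
    Finset.sum_add_distrib, exp_add, ← Finset.sum_mul, cpow_def_of_ne_zero hr_ne,
    ← ofReal_log hr.le, mul_assoc, mul_comm (∑ i, z i)]

/-- The linear change of frequency between the Mellin variable `ξ` of `c + iξ` and the Fourier
variable `-ξ / 2π`. -/
def mellinFrequency (n : ℕ) : (Fin n → ℝ) ≃ₜ EuclideanSpace ℝ (Fin n) :=
  (Homeomorph.smulOfNeZero (-(2 * Real.pi)⁻¹)
    (neg_ne_zero.2 (inv_ne_zero Real.two_pi_pos.ne'))).trans
    (PiLp.continuousLinearEquiv 2 ℝ fun _ : Fin n => ℝ).symm.toHomeomorph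

lemma mellinFrequency_apply (ξ : Fin n → ℝ) (i : Fin n) :
    mellinFrequency n ξ i = -(2 * Real.pi)⁻¹ * ξ i := rfl

lemma mellinT_eq_fourier_logPullback (g : (Fin n → ℝ) → ℝ) (c ξ : Fin n → ℝ) :
    mellinT n g (fun i => (c i : ℂ) + I * ξ i) =
      𝓕 (fun t => (logPullback c g t : ℂ)) (mellinFrequency n ξ) := by
  rw [mellinT_eq_integral_expVec, Real.fourier_eq']
  refine integral_congr_ae (.of_forall fun t => ?_)
  have hexponent : ∑ i, ((c i : ℂ) + I * ξ i) * t i =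
      ((-2 * Real.pi * inner ℝ t (mellinFrequency n ξ) : ℝ) : ℂ) * I + (∑ i, c i * t i : ℝ) := by
    simp only [PiLp.inner_apply, mellinFrequency_apply, RCLike.inner_apply, conj_trivial]
    push_cast
    rw [Finset.mul_sum, Finset.sum_mul, ← Finset.sum_add_distrib]
    refine Finset.sum_congr rfl fun i _ => ?_
    have : (Real.pi : ℂ) ≠ 0 := ofReal_ne_zero.2 Real.pi_ne_zero
    field_simp
    ring
  simp only [hexponent, exp_add, logPullback, ofReal_mul, ofReal_exp, smul_eq_mul, mul_assoc]

lemma setIntegral_posOrth_mul_eq_convolution (c : Fin n → ℝ) (k f : (Fin n → ℝ) → ℝ)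
    (s : EuclideanSpace ℝ (Fin n)) :
    ∫ x in posOrth n, k (fun i => expVec s i * x i) * f x =
      Real.exp (-∑ i, c i * s i) *
        ((fun t => logPullback (fun i => 1 - c i) f (-t)) ⋆[mul ℝ ℝ] logPullback c k) s := by
  rw [setIntegral_posOrth, ← integral_neg_eq_self, convolution_def, ← integral_const_mul]
  refine integral_congr_ae (.of_forall fun t => ?_)
  have hexponent : ∑ i, (-t) i =
      -∑ i, c i * s i + (∑ i, (1 - c i) * (-t) i + ∑ i, c i * (s - t) i) := by
    simp only [PiLp.neg_apply, PiLp.sub_apply, ← Finset.sum_neg_distrib, ← Finset.sum_add_distrib]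
    exact Finset.sum_congr rfl fun i _ => by ring
  have hweight : ∏ i, expVec (-t) i = Real.exp (-∑ i, c i * s i) *
      (Real.exp (∑ i, (1 - c i) * (-t) i) * Real.exp (∑ i, c i * (s - t) i)) := by
    rw [← Real.exp_add, ← Real.exp_add, ← hexponent, Real.exp_sum]
    rfl
  simp only [hweight, ← expVec_add, ← sub_eq_add_neg, smul_eq_mul, logPullback,
    ContinuousLinearMap.mul_apply']
  ring

end LogPullback

section WeightedIntegrability

variable {n : ℕ} {c : Fin n → ℝ}

lemma memL1w_exp_neg_mul_sum (hc : ∀ i, 0 < c i) {δ : ℝ} (hδ : 0 < δ) :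
    MemL1w n c fun x => Real.exp (-(δ * ∑ i, x i)) := by
  have hfactor (i : Fin n) :
      Integrable (fun y : ℝ => Real.exp (-(δ * y)) * y ^ (c i - 1)) (volume.restrict (Ioi 0)) := by
    simpa [IntegrableOn, mul_comm] using integrableOn_rpow_mul_exp_neg_mul_rpow (p := 1)
      (s := c i - 1) (by linarith [hc i]) one_pos hδ
  rw [MemL1w, posOrth_eq_pi, IntegrableOn, volume_pi, Measure.restrict_pi_pi]
  simpa only [Finset.mul_sum, ← Finset.sum_neg_distrib, Real.exp_sum, ← Finset.prod_mul_distrib]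
    using Integrable.fintype_prod hfactor

lemma memL1w_of_abs_le {f g : (Fin n → ℝ) → ℝ} (hg : MemL1w n c g)
    (hf : AEMeasurable f (volume.restrict (posOrth n))) (hfg : ∀ x ∈ posOrth n, |f x| ≤ g x) :
    MemL1w n c f := by
  refine Integrable.mono' hg
    (hf.mul (Measurable.aemeasurable (by fun_prop))).aestronglyMeasurable ?_
  filter_upwards [ae_restrict_mem measurableSet_posOrth] with x hx
  have hweight : 0 ≤ ∏ i, x i ^ (c i - 1) :=
    Finset.prod_nonneg fun i _ => Real.rpow_nonneg (hx i).le _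
  rw [norm_mul, Real.norm_of_nonneg hweight]
  exact mul_le_mul_of_nonneg_right (hfg x hx) hweight

lemma integrableOn_posOrth_prod_cpow_mul {g : (Fin n → ℝ) → ℝ} {z : Fin n → ℂ}
    (hg : MemL1w n (fun i => (z i).re) g) (hg_meas : AEMeasurable g (volume.restrict (posOrth n))) :
    IntegrableOn (fun x => (∏ i, (x i : ℂ) ^ (z i - 1)) * g x) (posOrth n) := by
  refine Integrable.congr' hg (AEMeasurable.aestronglyMeasurable
    ((Measurable.aemeasurable (by fun_prop)).mul (by fun_prop))) ?_
  filter_upwards [ae_restrict_mem measurableSet_posOrth] with x hx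
  simp only [norm_mul, norm_prod, norm_real, norm_cpow_eq_rpow_re_of_pos (hx _), sub_re, one_re,
    Real.norm_of_nonneg (Real.rpow_nonneg (hx _).le _), mul_comm]

lemma re_sum_add_two_pos {ι : Type*} [Fintype ι] {z : ι → ℂ} (hz : ∀ i, 0 < (z i).re) :
    0 < (∑ i, z i + 2).re := by
  rw [add_re, re_sum, re_ofNat]
  exact add_pos_of_nonneg_of_pos (Finset.sum_nonneg fun i _ => (hz i).le) two_pos

end WeightedIntegrability

section CostFunctions

open scoped FourierTransform Convolution
open ContinuousLinearMap (mul)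

variable {n : ℕ}

/-- A cost function that is only measurable on the positive orthant instead of `C¹`. Boundedness is
asked of the level set `q = 1`, of which the others are dilates by homogeneity. -/
structure IsMeasurableCostFun (n : ℕ) (q : (Fin n → ℝ) → ℝ) : Prop where
  aemeasurable : AEMeasurable q (volume.restrict (posOrth n))
  pos : ∀ x ∈ posOrth n, 0 < q x
  map_mul : ∀ r : ℝ, 0 < r → ∀ x ∈ posOrth n, q (fun i => r * x i) = r * q x
  isBounded_levelSet : Bornology.IsBounded {x | x ∈ posOrth n ∧ q x = 1}

variable {q : (Fin n → ℝ) → ℝ} {c : Fin n → ℝ}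

lemma IsCostFun.isMeasurableCostFun (hq : IsCostFun n q) : IsMeasurableCostFun n q where
  aemeasurable := hq.1.continuousOn.aemeasurable measurableSet_posOrth
  pos := hq.2.1
  map_mul := hq.2.2.1
  isBounded_levelSet := hq.2.2.2 1

namespace IsMeasurableCostFun

lemma exists_sum_le_mul (hq : IsMeasurableCostFun n q) :
    ∃ R > 0, ∀ x ∈ posOrth n, ∑ i, x i ≤ R * q x := by
  let S : (Fin n → ℝ) →L[ℝ] ℝ := ∑ i, ContinuousLinearMap.proj i
  obtain ⟨R, hR, hbound⟩ := (S.lipschitz.isBounded_image hq.isBounded_levelSet).exists_pos_norm_le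
  refine ⟨R, hR, fun x hx => ?_⟩
  have hqx : 0 < q x := hq.pos x hx
  have hlevel : (fun i => (q x)⁻¹ * x i) ∈ {y | y ∈ posOrth n ∧ q y = 1} :=
    ⟨fun i => mul_pos (inv_pos.2 hqx) (hx i), by
      rw [hq.map_mul _ (inv_pos.2 hqx) x hx, inv_mul_cancel₀ hqx.ne']⟩
  have hle := (le_abs_self _).trans (hbound _ (mem_image_of_mem S hlevel))
  simp only [S, sum_apply, ContinuousLinearMap.proj_apply, ← Finset.mul_sum] at hle
  rw [inv_mul_le_iff₀ hqx] at hle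
  linarith

lemma memL1w_exp_neg (hq : IsMeasurableCostFun n q) (hc : ∀ i, 0 < c i) :
    MemL1w n c fun x => Real.exp (-q x) := by
  obtain ⟨R, hR, hbound⟩ := hq.exists_sum_le_mul
  have hq_meas := hq.aemeasurable
  refine memL1w_of_abs_le (memL1w_exp_neg_mul_sum hc (inv_pos.2 hR)) (by fun_prop) fun x hx => ?_
  rw [Real.abs_exp, Real.exp_le_exp, neg_le_neg_iff, inv_mul_le_iff₀ hR]
  exact hbound x hx

lemma memL1w_max_one_sub (hq : IsMeasurableCostFun n q) (hc : ∀ i, 0 < c i) :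
    MemL1w n c fun x => max 0 (1 - q x) := by
  have hq_meas := hq.aemeasurable
  refine memL1w_of_abs_le (hq.memL1w_exp_neg hc) (by fun_prop) fun x _ => ?_
  rw [abs_of_nonneg (le_max_left _ _)]
  exact max_le (Real.exp_pos _).le (Real.one_sub_le_exp_neg _)

lemma max_sub_map_mul (hq : IsMeasurableCostFun n q) {p : ℝ} (hp : 0 < p) {x : Fin n → ℝ}
    (hx : x ∈ posOrth n) : max 0 (p - q fun i => p * x i) = p * max 0 (1 - q x) := by
  rw [hq.map_mul p hp x hx, mul_max_of_nonneg _ _ hp.le, mul_zero, mul_sub, mul_one]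

lemma mellinT_max_sub (hq : IsMeasurableCostFun n q) (z : Fin n → ℂ) {p : ℝ} (hp : 0 < p) :
    mellinT n (fun x => max 0 (p - q x)) z =
      (p : ℂ) ^ (∑ i, z i + 1) * mellinT n (fun x => max 0 (1 - q x)) z := by
  have hscale : mellinT n (fun x => max 0 (p - q fun i => p * x i)) z =
      p * mellinT n (fun x => max 0 (1 - q x)) z := by
    simp only [mellinT, ← integral_const_mul]
    refine setIntegral_congr_fun measurableSet_posOrth fun x hx => ?_
    simp only [hq.max_sub_map_mul hp hx, ofReal_mul, mul_left_comm]
  rw [mellinT_eq_cpow_mul_mellinT_comp_mul _ z hp, hscale, ← mul_assoc,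
    cpow_add _ _ (ofReal_ne_zero.2 hp.ne'), cpow_one]

lemma mellinT_exp_neg_eq_Gamma_mul (hq : IsMeasurableCostFun n q) {z : Fin n → ℂ}
    (hz : ∀ i, 0 < (z i).re) :
    mellinT n (fun x => Real.exp (-q x)) z =
      Complex.Gamma (∑ i, z i + 2) * mellinT n (fun x => max 0 (1 - q x)) z := by
  have hq_meas := hq.aemeasurable
  have hint := integrableOn_posOrth_prod_cpow_mul (hq.memL1w_exp_neg hz) (by fun_prop)
  calc mellinT n (fun x => Real.exp (-q x)) z
      = ∫ p in Ioi (0 : ℝ), (Real.exp (-p) : ℂ) * mellinT n (fun x => max 0 (p - q x)) z :=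
        integral_mul_exp_neg_eq_integral_integral_max_sub
          (by fun_prop : Measurable _).aestronglyMeasurable hq_meas
          ((ae_restrict_mem measurableSet_posOrth).mono fun x hx => (hq.pos x hx).le) hint
    _ = ∫ p in Ioi (0 : ℝ), (Real.exp (-p) : ℂ) * (p : ℂ) ^ (∑ i, z i + 2 - 1) *
          mellinT n (fun x => max 0 (1 - q x)) z :=
        setIntegral_congr_fun measurableSet_Ioi fun p hp => by
          rw [hq.mellinT_max_sub z hp, mul_assoc, add_sub_assoc]
          norm_num
    _ = Complex.Gamma (∑ i, z i + 2) * mellinT n (fun x => max 0 (1 - q x)) z := by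
        rw [integral_mul_const, Gamma_eq_integral (re_sum_add_two_pos hz), GammaIntegral]

lemma mellinT_exp_neg_eq_zero_iff (hq : IsMeasurableCostFun n q) {z : Fin n → ℂ}
    (hz : ∀ i, 0 < (z i).re) :
    mellinT n (fun x => Real.exp (-q x)) z = 0 ↔ mellinT n (fun x => max 0 (1 - q x)) z = 0 := by
  rw [hq.mellinT_exp_neg_eq_Gamma_mul hz, mul_eq_zero,
    or_iff_right (Gamma_ne_zero_of_re_pos (re_sum_add_two_pos hz))]

lemma piq_mul_eq_mul_piq_one (hq : IsMeasurableCostFun n q) (f : (Fin n → ℝ) → ℝ) {p₀ : ℝ}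
    (hp₀ : 0 < p₀) {p : Fin n → ℝ} (hp : p ∈ posOrth n) :
    Piq n q f p₀ (fun i => p₀ * p i) = p₀ * Piq n q f 1 p := by
  rw [Piq, Piq, ← integral_const_mul]
  refine setIntegral_congr_fun measurableSet_posOrth fun x hx => ?_
  have hpx : (fun i => p i * x i) ∈ posOrth n := fun i => mul_pos (hp i) (hx i)
  simp only [mul_assoc, hq.max_sub_map_mul hp₀ hpx]

lemma forall_piq_eq_zero_iff_convolution_eq_zero (hq : IsMeasurableCostFun n q)
    (c : Fin n → ℝ) (f : (Fin n → ℝ) → ℝ) :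
    (∀ p₀ : ℝ, 0 < p₀ → ∀ p ∈ posOrth n, Piq n q f p₀ p = 0) ↔
      (fun t => logPullback (fun i => 1 - c i) f (-t)) ⋆[mul ℝ ℝ]
        logPullback c (fun x => max 0 (1 - q x)) = 0 := by
  have hpiq (s : EuclideanSpace ℝ (Fin n)) :=
    setIntegral_posOrth_mul_eq_convolution c (fun x => max 0 (1 - q x)) f s
  refine ⟨fun h => funext fun s => ?_, fun h p₀ hp₀ p hp => ?_⟩
  · have hzero := (hpiq s).symm.trans (h 1 one_pos (expVec s) (expVec_mem_posOrth s))
    exact (mul_eq_zero.1 hzero).resolve_left (Real.exp_ne_zero _)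
  · obtain ⟨s, hs⟩ := exists_expVec_eq fun i => div_pos (hp i) hp₀
    have hp_eq : p = fun i => p₀ * expVec s i :=
      funext fun i => by rw [hs, mul_div_cancel₀ _ hp₀.ne']
    rw [hp_eq, hq.piq_mul_eq_mul_piq_one f hp₀ (expVec_mem_posOrth s)]
    refine mul_eq_zero_of_right _ ((hpiq s).trans ?_)
    rw [h, Pi.zero_apply, mul_zero]

lemma piq_injective_iff_convolution_injective (hq : IsMeasurableCostFun n q) (c : Fin n → ℝ) :
    (∀ f : (Fin n → ℝ) → ℝ, MemL1w n (fun i => 1 - c i) f →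
        (∀ p₀ : ℝ, 0 < p₀ → ∀ p ∈ posOrth n, Piq n q f p₀ p = 0) →
        ∀ᵐ x ∂volume.restrict (posOrth n), f x = 0) ↔
      ∀ F : EuclideanSpace ℝ (Fin n) → ℝ, Integrable F →
        F ⋆[mul ℝ ℝ] logPullback c (fun x => max 0 (1 - q x)) = 0 → F =ᵐ[volume] 0 := by
  have hsurj : Function.Surjective fun f t => logPullback (fun i => 1 - c i) f (-t) := fun F => by
    obtain ⟨f, hf⟩ := logPullback_surjective (fun i => 1 - c i) fun t => F (-t)
    exact ⟨f, funext fun t => by simp only [hf, neg_neg]⟩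
  have hneg := (MeasurableEquiv.neg (EuclideanSpace ℝ (Fin n))).measurableEmbedding
  rw [hsurj.forall]
  refine forall_congr' fun f => imp_congr ?_ (imp_congr ?_ ?_)
  · rw [memL1w_iff_integrable_logPullback]
    exact ((Measure.measurePreserving_neg volume).integrable_comp_emb hneg).symm
  · exact hq.forall_piq_eq_zero_iff_convolution_eq_zero c f
  · rw [ae_posOrth_eq_zero_iff_logPullback fun i => 1 - c i]
    conv_lhs => rw [← Measure.map_neg_eq_self volume]
    exact hneg.ae_map_iff

end IsMeasurableCostFun

theorem piq_injective_L1_iff_mellin_zeros_nowhereDense_general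
    (hq : IsMeasurableCostFun n q) (hc : ∀ i, 0 < c i) :
    (∀ f : (Fin n → ℝ) → ℝ, MemL1w n (fun i => 1 - c i) f →
        (∀ p0 : ℝ, 0 < p0 → ∀ p ∈ posOrth n, Piq n q f p0 p = 0) →
        ∀ᵐ x ∂volume.restrict (posOrth n), f x = 0) ↔
      IsNowhereDense {ξ : Fin n → ℝ |
        mellinT n (fun x => Real.exp (-q x)) (fun i => (c i : ℂ) + I * (ξ i : ℂ)) = 0} := by
  have hkernel := memL1w_iff_integrable_logPullback.1 (hq.memL1w_max_one_sub hc)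
  have hzeros : {ξ : Fin n → ℝ |
        mellinT n (fun x => Real.exp (-q x)) (fun i => (c i : ℂ) + I * ξ i) = 0} =
      mellinFrequency n ⁻¹'
        {w | 𝓕 (fun t => (logPullback c (fun x => max 0 (1 - q x)) t : ℂ)) w = 0} := by
    ext ξ
    simp only [mem_ofPred_eq, mem_preimage, ← mellinT_eq_fourier_logPullback]
    exact hq.mellinT_exp_neg_eq_zero_iff fun i => by simpa using hc i
  rw [hzeros, isNowhereDense_preimage_homeomorph, hq.piq_injective_iff_convolution_injective c,
    convolution_injective_iff_isNowhereDense_fourier_zeros hkernel]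

end CostFunctions

/-- Theorem: for a cost function `q` and `c ∈ ℝ^n_+`, the profit operator `Π_q` is
injective on `L¹_{I-c}(ℝ^n_+)` iff the zero set of `(M e^{-q})(c + iξ)` is nowhere
dense in `ℝ^n`. -/
theorem piq_injective_L1_iff_mellin_zeros_nowhereDense
    (n : ℕ) (hn : 2 ≤ n) (q : (Fin n → ℝ) → ℝ) (hq : IsCostFun n q)
    (c : Fin n → ℝ) (hc : ∀ i, 0 < c i) :
    (∀ f : (Fin n → ℝ) → ℝ, MemL1w n (fun i => 1 - c i) f →
        (∀ p0 : ℝ, 0 < p0 → ∀ p ∈ posOrth n, Piq n q f p0 p = 0) →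
        ∀ᵐ x ∂(volume.restrict (posOrth n)), f x = 0) ↔
      IsNowhereDense {ξ : Fin n → ℝ |
        mellinT n (fun x => Real.exp (-q x)) (fun i => (c i : ℂ) + I * (ξ i : ℂ)) = 0} := by
  exact piq_injective_L1_iff_mellin_zeros_nowhereDense_general hq.isMeasurableCostFun hc
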